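/- Let Ω ⊆ ℂ² be open and let X : Ω → ℂ² be a holomorphic vector field. Let U ⊆ Ω be a connected open set whose closure cl U is compact and contained in Ω, let K := {p ∈ cl U : X(p) = 0}, assume K ⊆ U, and assume K is essential: there exists ε > 0 such that every continuous map X' : cl U → ℂ² with ‖X'(p) − X(p)‖ < ε for all p ∈ cl U has a zero in cl U. Let 𝒢 be a set of holomorphic vector fields on Ω that is closed under addition, multiplication by complex scalars, and Lie bracket, and such that every Y ∈ 𝒢 tracks X: for each Y ∈ 𝒢 there is a continuous f_Y : Ω → ℂ with DX(p)(Y(p)) − DY(p)(X(p)) = f_Y(p) • X(p) for all p ∈ Ω. Then there exists p ∈ K with Y(p) = 0 for every Y ∈ 𝒢. -/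

import Mathlib

open Set

/-!
Among the zeros of `X` in the block let `p` be one of maximal norm. If `Y` tracks `X` and `γ` is an
integral curve of `Y` through `p`, then `X ∘ γ` solves a linear ODE with vanishing initial value, so
`γ` stays in the zero set of `X` and `‖γ‖²` has a local maximum there. The second derivative test
gives `‖Y p‖² + Re ⟪p, DY(p)(Y p)⟫ ≤ 0`. Since `I • Y` also tracks `X`, and replacing `Y` by `I • Y`
only changes the sign of the inner product, adding the two inequalities yields `Y p = 0`.
-/

open Filter Metric Topology VectorField
open scoped RealInnerProductSpace NNReal

section LocalMax

theorem nonpos_of_isLocalMax_of_hasDerivAt {φ φ' : ℝ → ℝ} {t₀ c : ℝ}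
    (hφ : ∀ᶠ t in 𝓝 t₀, HasDerivAt φ (φ' t) t) (hφ' : HasDerivAt φ' c t₀)
    (hmax : IsLocalMax φ t₀) : c ≤ 0 := by
  by_contra! hc
  have hderiv : deriv φ =ᶠ[𝓝 t₀] φ' := hφ.mono fun t ht => ht.deriv
  have hderiv₂ : deriv (deriv φ) t₀ = c := by rw [hderiv.deriv_eq, hφ'.deriv]
  have hmin : IsLocalMin φ t₀ := isLocalMin_of_deriv_deriv_pos (hderiv₂ ▸ hc)
    hmax.deriv_eq_zero hφ.self_of_nhds.continuousAt
  have hconst : φ =ᶠ[𝓝 t₀] fun _ => φ t₀ := by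
    filter_upwards [hmin, hmax] with t hle hge using le_antisymm hge hle
  have hzero : deriv (deriv φ) t₀ = 0 := by simp [hconst.deriv.deriv_eq]
  exact hc.ne (hzero.symm.trans hderiv₂)

theorem norm_sq_add_inner_nonpos_of_isLocalMax_norm {E : Type*} [NormedAddCommGroup E]
    [InnerProductSpace ℝ E] {γ v : ℝ → E} {a : E} {t₀ : ℝ}
    (hγ : ∀ᶠ t in 𝓝 t₀, HasDerivAt γ (v t) t) (hv : HasDerivAt v a t₀)
    (hmax : IsLocalMax (fun t => ‖γ t‖) t₀) : ‖v t₀‖ ^ 2 + ⟪γ t₀, a⟫ ≤ 0 := by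
  have hderiv₂ : HasDerivAt (fun t => 2 * ⟪γ t, v t⟫) (2 * (⟪γ t₀, a⟫ + ⟪v t₀, v t₀⟫)) t₀ :=
    (hγ.self_of_nhds.inner ℝ hv).const_mul 2
  have hmax_sq : IsLocalMax (fun t => ‖γ t‖ ^ 2) t₀ :=
    hmax.mono fun t ht => pow_le_pow_left₀ (norm_nonneg _) ht 2
  have := nonpos_of_isLocalMax_of_hasDerivAt (hγ.mono fun t ht => ht.norm_sq) hderiv₂ hmax_sq
  rw [real_inner_self_eq_norm_sq] at this
  linarith

end LocalMax

section ODE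

theorem eventually_eq_zero_of_hasDerivAt_clm_apply {E : Type*} [NormedAddCommGroup E]
    [NormedSpace ℝ E] {u : ℝ → E} {A : ℝ → E →L[ℝ] E} {C : ℝ≥0} {t₀ : ℝ}
    (hu : ∀ᶠ t in 𝓝 t₀, HasDerivAt u (A t (u t)) t) (hA : ∀ᶠ t in 𝓝 t₀, ‖A t‖ ≤ C)
    (h₀ : u t₀ = 0) : ∀ᶠ t in 𝓝 t₀, u t = 0 := by
  refine ODE_solution_unique_of_eventually (v := fun t => A t) (s := fun _ => univ) (K := C)
    (g := fun _ => 0) ?_ (hu.mono fun t ht => ⟨ht, mem_univ _⟩) ?_ h₀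
  · exact hA.mono fun t ht => ((A t).lipschitz.weaken ht).lipschitzOnWith
  · exact .of_forall fun t => ⟨by simpa using hasDerivAt_const t (0 : E), mem_univ _⟩

theorem exists_isIntegralCurveAt_of_lipschitzOnWith {E : Type*} [NormedAddCommGroup E]
    [NormedSpace ℝ E] [CompleteSpace E] {Y : E → E} {s : Set E} {p : E} {C : ℝ≥0}
    (hs : s ∈ 𝓝 p) (hY : LipschitzOnWith C Y s) (t₀ : ℝ) :
    ∃ γ : ℝ → E, γ t₀ = p ∧ IsIntegralCurveAt γ (fun _ => Y) t₀ := by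
  have hbound : ∀ᶠ z in 𝓝 p, ‖Y z‖ < ‖Y p‖ + 1 :=
    (hY.continuousOn.continuousAt hs).norm.eventually_lt_const (lt_add_one _)
  obtain ⟨a, ha, hball⟩ := nhds_basis_closedBall.mem_iff.mp (inter_mem hs hbound)
  lift a to ℝ≥0 using ha.le
  set L : ℝ≥0 := ‖Y p‖₊ + 1
  have hε : 0 < (a / L : ℝ) := div_pos ha (by positivity)
  have hPicard : IsPicardLindelof (fun _ : ℝ => Y) (tmin := t₀ - a / L) (tmax := t₀ + a / L)
      ⟨t₀, by constructor <;> linarith⟩ p a 0 L C :=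
    .of_time_independent (fun z hz => (hball hz).2.le) (hY.mono fun z hz => (hball hz).1)
      (by simp [field])
  obtain ⟨γ, hγ₀, hγ⟩ := hPicard.exists_eq_forall_mem_Icc_hasDerivWithinAt₀
  refine ⟨γ, hγ₀, ?_⟩
  filter_upwards [Ioo_mem_nhds (sub_lt_self t₀ hε) (lt_add_of_pos_right t₀ hε)] with t ht
  exact (hγ t (Ioo_subset_Icc_self ht)).hasDerivAt (Icc_mem_nhds ht.1 ht.2)

theorem exists_lipschitzOnWith_of_differentiableOn_nhds {E F : Type*} [NormedAddCommGroup E]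
    [NormedSpace ℂ E] [NormedAddCommGroup F] [NormedSpace ℂ F] {f : E → F} {s : Set E} {p : E}
    (hs : s ∈ 𝓝 p) (hf : DifferentiableOn ℂ f s) :
    ∃ C, ∃ t ∈ 𝓝 p, LipschitzOnWith C f t := by
  have hcont : ∀ᶠ z in 𝓝 p, f z ∈ ball (f p) (1 / 2) :=
    (hf.continuousOn.continuousAt hs).eventually (ball_mem_nhds _ one_half_pos)
  obtain ⟨r, hr, hball⟩ := Metric.mem_nhds_iff.mp (inter_mem hs hcont)
  lift r to ℝ≥0 using hr.le
  refine ⟨1 / (r / 2), ball p (r / 4), ball_mem_nhds p (by positivity), ?_⟩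
  refine LipschitzOnWith.of_dist_le_mul fun w hw z hz => ?_
  have hsub : ball z (r / 2) ⊆ ball p r := by
    refine ball_subset_ball' ?_
    linarith [mem_ball.mp hz]
  have hmaps : MapsTo f (ball z (r / 2)) (closedBall (f z) 1) := fun x hx => by
    have hx := mem_ball.mp (hball (hsub hx)).2
    have hz := mem_ball.mp (hball (hsub (mem_ball_self (by positivity)))).2
    exact mem_closedBall.mpr (by linarith [dist_triangle_right (f x) (f z) (f p)])
  have hwz : w ∈ ball z (r / 2) := mem_ball.mpr (by
    linarith [dist_triangle_right w z p, mem_ball.mp hw, mem_ball.mp hz])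
  exact Complex.dist_le_div_mul_dist_of_mapsTo_ball
    (hf.mono fun x hx => (hball (hsub hx)).1) hmaps hwz

end ODE

section Tracking

/-- `Y` tracks `X` on `s`: the bracket `[Y, X]` is a continuous multiple of `X` on `s`. This makes
the flow of `Y` preserve the zeros of `X`. Differentiability of `X` and `Y` is not part of the
definition, and `lieBracket` takes junk values without it. -/
def TracksOn (𝕜 : Type*) [NontriviallyNormedField 𝕜] {E : Type*} [NormedAddCommGroup E]
    [NormedSpace 𝕜 E] (Y X : E → E) (s : Set E) : Prop :=
  ∃ f : E → 𝕜, ContinuousOn f s ∧ ∀ p ∈ s, lieBracket 𝕜 Y X p = f p • X p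

theorem TracksOn.const_smul {𝕜 : Type*} [NontriviallyNormedField 𝕜] {E : Type*}
    [NormedAddCommGroup E] [NormedSpace 𝕜 E] {Y X : E → E} {s : Set E} (h : TracksOn 𝕜 Y X s)
    (hY : ∀ p ∈ s, DifferentiableAt 𝕜 Y p) (c : 𝕜) : TracksOn 𝕜 (c • Y) X s := by
  obtain ⟨f, hf, hbracket⟩ := h
  refine ⟨c • f, hf.const_smul c, fun p hp => ?_⟩
  rw [lieBracket_const_smul_left (hY p hp), hbracket p hp, Pi.smul_apply, smul_assoc]

theorem TracksOn.eventually_apply_integralCurve_eq_zero {𝕜 : Type*} [RCLike 𝕜] {E : Type*}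
    [NormedAddCommGroup E] [NormedSpace 𝕜 E] [NormedSpace ℝ E] [IsScalarTower ℝ 𝕜 E]
    {Y X : E → E} {s t : Set E} {γ : ℝ → E} {t₀ : ℝ} {C : ℝ≥0} (h : TracksOn 𝕜 Y X s)
    (hX : DifferentiableOn 𝕜 X s) (hs : s ∈ 𝓝 (γ t₀)) (hY : LipschitzOnWith C Y t)
    (ht : t ∈ 𝓝 (γ t₀)) (hγ : IsIntegralCurveAt γ (fun _ => Y) t₀) (h₀ : X (γ t₀) = 0) :
    ∀ᶠ τ in 𝓝 t₀, X (γ τ) = 0 := by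
  obtain ⟨f, hf, hbracket⟩ := h
  have hγt₀ : Tendsto γ (𝓝 t₀) (𝓝 (γ t₀)) := hγ.continuousAt
  have hbound : ∀ᶠ τ in 𝓝 t₀, ‖f (γ τ)‖ < ‖f (γ t₀)‖ + 1 :=
    hγt₀.eventually ((hf.continuousAt hs).norm.eventually_lt_const (lt_add_one _))
  let A (τ : ℝ) : E →L[𝕜] E := fderiv 𝕜 Y (γ τ) + f (γ τ) • .id 𝕜 E
  refine eventually_eq_zero_of_hasDerivAt_clm_apply (u := X ∘ γ)
    (A := fun τ => (A τ).restrictScalars ℝ) (C := C + (‖f (γ t₀)‖₊ + 1)) ?_ ?_ h₀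
  · filter_upwards [hγ, hγt₀.eventually (eventually_mem_nhds_iff.mpr hs)] with τ hγτ hsτ
    have hXγ : HasDerivAt (X ∘ γ) (fderiv 𝕜 X (γ τ) (Y (γ τ))) τ :=
      ((hX.differentiableAt hsτ).hasFDerivAt.restrictScalars ℝ).comp_hasDerivAt τ hγτ
    exact hXγ.congr_deriv (sub_eq_iff_eq_add'.mp (hbracket _ (mem_of_mem_nhds hsτ)))
  · filter_upwards [hbound, hγt₀.eventually (eventually_mem_nhds_iff.mpr ht)] with τ hfτ htτ
    calc ‖(A τ).restrictScalars ℝ‖ = ‖A τ‖ := ContinuousLinearMap.norm_restrictScalars _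
      _ ≤ ‖fderiv 𝕜 Y (γ τ)‖ + ‖f (γ τ)‖ * ‖ContinuousLinearMap.id 𝕜 E‖ :=
        (norm_add_le _ _).trans_eq (by rw [norm_smul])
      _ ≤ C + (‖f (γ t₀)‖ + 1) * 1 := by
        gcongr
        · exact norm_fderiv_le_of_lipschitzOn 𝕜 htτ hY
        · exact ContinuousLinearMap.norm_id_le
      _ = ↑(C + (‖f (γ t₀)‖₊ + 1)) := by simp

end Tracking

section Hilbert

variable {E : Type*} [NormedAddCommGroup E] [InnerProductSpace ℂ E] [CompleteSpace E]
  {Y X : E → E} {Ω : Set E} {p : E}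

theorem norm_sq_add_re_inner_fderiv_nonpos (h : TracksOn ℂ Y X Ω)
    (hX : DifferentiableOn ℂ X Ω) (hY : DifferentiableOn ℂ Y Ω) (hΩ : Ω ∈ 𝓝 p) (hXp : X p = 0)
    (hmax : IsLocalMaxOn (fun z => ‖z‖) {z | X z = 0} p) :
    ‖Y p‖ ^ 2 + (inner ℂ p (fderiv ℂ Y p (Y p))).re ≤ 0 := by
  obtain ⟨C, t, ht, hlip⟩ := exists_lipschitzOnWith_of_differentiableOn_nhds hΩ hY
  obtain ⟨γ, rfl, hγ⟩ := exists_isIntegralCurveAt_of_lipschitzOnWith ht hlip 0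
  have hzero : ∀ᶠ τ in 𝓝 0, X (γ τ) = 0 :=
    h.eventually_apply_integralCurve_eq_zero hX hΩ hlip ht hγ hXp
  have hmaxγ : IsLocalMax (fun τ => ‖γ τ‖) 0 := by
    filter_upwards [hzero, hγ.continuousAt.eventually (eventually_nhdsWithin_iff.mp hmax)]
      with τ hτ hle using hle hτ
  have hYγ : HasDerivAt (Y ∘ γ) (fderiv ℂ Y (γ 0) (Y (γ 0))) 0 :=
    ((hY.differentiableAt hΩ).hasFDerivAt.restrictScalars ℝ).comp_hasDerivAt 0 hγ.hasDerivAt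
  let : InnerProductSpace ℝ E := .complexToReal
  exact norm_sq_add_inner_nonpos_of_isLocalMax_norm hγ hYγ hmaxγ

theorem TracksOn.eq_zero_of_isLocalMaxOn_norm (h : TracksOn ℂ Y X Ω) (hΩ : IsOpen Ω)
    (hX : DifferentiableOn ℂ X Ω) (hY : DifferentiableOn ℂ Y Ω) (hp : p ∈ Ω) (hXp : X p = 0)
    (hmax : IsLocalMaxOn (fun z => ‖z‖) {z | X z = 0} p) : Y p = 0 := by
  have hΩp : Ω ∈ 𝓝 p := hΩ.mem_nhds hp
  have hYdiff : ∀ q ∈ Ω, DifferentiableAt ℂ Y q := fun q hq => hY.differentiableAt (hΩ.mem_nhds hq)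
  have hineqY := norm_sq_add_re_inner_fderiv_nonpos h hX hY hΩp hXp hmax
  have hineqIY := norm_sq_add_re_inner_fderiv_nonpos (h.const_smul hYdiff Complex.I) hX
    (hY.const_smul Complex.I) hΩp hXp hmax
  have hsecond : fderiv ℂ (Complex.I • Y) p ((Complex.I • Y) p) = -fderiv ℂ Y p (Y p) := by
    rw [fderiv_const_smul (hYdiff p hp), Pi.smul_apply, smul_apply, map_smul,
      smul_smul, Complex.I_mul_I, neg_one_smul]
  rw [hsecond, inner_neg_right, Complex.neg_re, Pi.smul_apply, norm_smul, Complex.norm_I,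
    one_mul] at hineqIY
  exact norm_eq_zero.mp (sq_nonpos_iff _ |>.mp (by linarith))

end Hilbert

theorem isCompact_sep_eq {α β : Type*} [TopologicalSpace α] [TopologicalSpace β] [T1Space β]
    {s : Set α} {f : α → β} (hs : IsCompact s) (hf : ContinuousOn f s) (b : β) :
    IsCompact {a ∈ s | f a = b} := by
  obtain ⟨t, ht, hft⟩ := continuousOn_iff_isClosed.mp hf {b} isClosed_singleton
  have hsep : {a ∈ s | f a = b} = s ∩ t := by rw [inter_comm, ← hft, inter_comm]; rfl
  exact hsep ▸ hs.inter_right ht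

theorem common_zero_of_lie_algebra_tracking_complex_general {E : Type*} [NormedAddCommGroup E]
    [InnerProductSpace ℂ E] [CompleteSpace E] {X : E → E} {Ω K : Set E} (hΩ : IsOpen Ω)
    (hX : DifferentiableOn ℂ X Ω) (hK : K ⊆ {p ∈ Ω | X p = 0}) (hKcomp : IsCompact K)
    (hKne : K.Nonempty) (hisol : ∀ᶠ z in 𝓝ˢ K, X z = 0 → z ∈ K) :
    ∃ p ∈ K, ∀ Y : E → E, DifferentiableOn ℂ Y Ω → TracksOn ℂ Y X Ω → Y p = 0 := by
  obtain ⟨p, hpK, hpmax⟩ := hKcomp.exists_isMaxOn hKne continuous_norm.continuousOn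
  obtain ⟨hpΩ, hXp⟩ := hK hpK
  have hmax : IsLocalMaxOn (fun z => ‖z‖) {z | X z = 0} p :=
    eventually_nhdsWithin_iff.mpr <|
      (hisol.filter_mono (nhds_le_nhdsSet hpK)).mono fun z hz hXz => hpmax (hz hXz)
  exact ⟨p, hpK, fun Y hY h => h.eq_zero_of_isLocalMaxOn_norm hΩ hX hY hpΩ hXp hmax⟩

/-- **Hirsch, Theorem 1.3(a) (local form).**
A Lie algebra `𝒢` of holomorphic vector fields on an open set `Ω ⊆ ℂ²`, each of whose
members tracks `X`, has a common zero in every essential `X`-block. -/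
theorem common_zero_of_lie_algebra_tracking_complex
    (Ω : Set (EuclideanSpace ℂ (Fin 2))) (hΩ : IsOpen Ω)
    (X : EuclideanSpace ℂ (Fin 2) → EuclideanSpace ℂ (Fin 2))
    (hX : DifferentiableOn ℂ X Ω)
    (U : Set (EuclideanSpace ℂ (Fin 2))) (hUopen : IsOpen U) (hUconn : IsConnected U)
    (hUcomp : IsCompact (closure U)) (hUΩ : closure U ⊆ Ω)
    (K : Set (EuclideanSpace ℂ (Fin 2)))
    (hK : K = {p ∈ closure U | X p = 0}) (hKU : K ⊆ U)
    (hess : ∃ ε > 0, ∀ X' : EuclideanSpace ℂ (Fin 2) → EuclideanSpace ℂ (Fin 2),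
      ContinuousOn X' (closure U) → (∀ p ∈ closure U, ‖X' p - X p‖ < ε) →
      ∃ p ∈ closure U, X' p = 0)
    (𝒢 : Set (EuclideanSpace ℂ (Fin 2) → EuclideanSpace ℂ (Fin 2)))
    (h𝒢diff : ∀ Y ∈ 𝒢, DifferentiableOn ℂ Y Ω)
    (h𝒢add : ∀ Y ∈ 𝒢, ∀ Z ∈ 𝒢, (fun p => Y p + Z p) ∈ 𝒢)
    (h𝒢smul : ∀ (c : ℂ), ∀ Y ∈ 𝒢, (fun p => c • Y p) ∈ 𝒢)
    (h𝒢bracket : ∀ Y ∈ 𝒢, ∀ Z ∈ 𝒢,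
      (fun p => fderiv ℂ Z p (Y p) - fderiv ℂ Y p (Z p)) ∈ 𝒢)
    (htrack : ∀ Y ∈ 𝒢, ∃ f : EuclideanSpace ℂ (Fin 2) → ℂ, ContinuousOn f Ω ∧
      ∀ p ∈ Ω, fderiv ℂ X p (Y p) - fderiv ℂ Y p (X p) = f p • X p) :
    ∃ p ∈ K, ∀ Y ∈ 𝒢, Y p = 0 := by
  subst hK
  obtain ⟨ε, hε, hperturb⟩ := hess
  have hXcont : ContinuousOn X (closure U) := hX.continuousOn.mono hUΩ
  have hisol : ∀ᶠ z in 𝓝ˢ {p ∈ closure U | X p = 0}, X z = 0 → z ∈ {p ∈ closure U | X p = 0} :=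
    mem_of_superset (hUopen.mem_nhdsSet.mpr hKU) fun z hzU hXz => ⟨subset_closure hzU, hXz⟩
  obtain ⟨p, hp, hzero⟩ := common_zero_of_lie_algebra_tracking_complex_general hΩ hX
    (fun p hp => ⟨hUΩ hp.1, hp.2⟩) (isCompact_sep_eq hUcomp hXcont 0)
    (hperturb X hXcont fun p _ => by simpa using hε) hisol
  exact ⟨p, hp, fun Y hY => hzero Y (h𝒢diff Y hY) (htrack Y hY)⟩
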